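/- Let 1 < p < ∞. Suppose X₀ ∈ ℂ^{K×ν} has row-support of size M, that Mε < 1/2, and let B = G X₀. Then X₀ is the unique minimizer of J_{p,1} subject to the data constraint: for every X ∈ ℂ^{K×ν} with GX = B and X ≠ X₀ one has J_{p,1}(X₀) < J_{p,1}(X). -/

import Mathlib

/-!
Put `H = X - X₀`, so that `G H = 0`, and let `S` be the sum of the `ℓp` norms of the rows of `H`.
The `i`-th row of `Gᴴ G H = 0` expresses row `i` of `H` as a combination of the other rows with
coefficients of modulus at most `ε`, whence every row of `H` has norm at most `ε S`
(`norm_le_of_gram_kernel`). Summing over the row support `T` of `X₀` gives at most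
`M ε S < S / 2`: less than half of the mass of `H` lies on `T`. This null space property implies
`J(X₀) < J(X₀ + H)` by the triangle inequality on `T`
(`sum_norm_lt_of_null_space_property`). Both steps hold for rows in an arbitrary normed space;
they are applied in `PiLp p`.
-/

open Finset

/-- The `J_{p,1}` norm of a matrix: sum of the ℓp norms of its rows. -/
noncomputable def Jp1 (p : ℝ) {K ν : ℕ} (X : Matrix (Fin K) (Fin ν) ℂ) : ℝ :=
  ∑ i, (∑ t, ‖X i t‖ ^ p) ^ (1 / p)

/-- The vector ℓ2 norm on ℂ^n. -/
noncomputable def l2norm {n : ℕ} (v : Fin n → ℂ) : ℝ := Real.sqrt (∑ i, ‖v i‖ ^ 2)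

/-- If a family of vectors is annihilated by a row of a Gram matrix with unit diagonal and
off-diagonal entries bounded by `ε`, then the corresponding vector is small compared to the
whole family. -/
lemma norm_le_of_gram_kernel {ι E : Type*} [Fintype ι] [NormedAddCommGroup E] [NormedSpace ℂ E]
    (ε : ℝ) (hε : 0 ≤ ε) (c : ι → ℂ) (h : ι → E) (i : ι) (hi : c i = 1)
    (hc : ∀ j, i ≠ j → ‖c j‖ ≤ ε) (hsum : ∑ j, c j • h j = 0) :
    ‖h i‖ ≤ ε * ∑ j, ‖h j‖ := by
  classical
  rw [← Finset.add_sum_erase _ _ (Finset.mem_univ i), hi, one_smul] at hsum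
  rw [eq_neg_of_add_eq_zero_left hsum, norm_neg, Finset.mul_sum]
  calc ‖∑ j ∈ Finset.univ.erase i, c j • h j‖
      ≤ ∑ j ∈ Finset.univ.erase i, ε * ‖h j‖ := by
        refine norm_sum_le_of_le _ fun j hj => ?_
        rw [norm_smul]
        exact mul_le_mul_of_nonneg_right (hc j (Finset.ne_of_mem_erase hj).symm) (norm_nonneg _)
    _ ≤ ∑ j, ε * ‖h j‖ :=
        Finset.sum_le_sum_of_subset_of_nonneg (Finset.erase_subset _ _)
          fun j _ _ => mul_nonneg hε (norm_nonneg _)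

/-- If `x` vanishes off `T` and `h` has less than half of its mass on `T`, then adding `h`
strictly increases the mass of `x`. -/
lemma sum_norm_lt_of_null_space_property {ι E : Type*} [Fintype ι] [NormedAddCommGroup E]
    (T : Finset ι) (x h : ι → E) (hx : ∀ i, i ∉ T → x i = 0)
    (hT : 2 * ∑ i ∈ T, ‖h i‖ < ∑ i, ‖h i‖) :
    ∑ i, ‖x i‖ < ∑ i, ‖x i + h i‖ := by
  classical
  have h1 := Finset.sum_add_sum_compl T fun i => ‖x i‖
  have h2 := Finset.sum_add_sum_compl T fun i => ‖h i‖
  have h3 := Finset.sum_add_sum_compl T fun i => ‖x i + h i‖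
  have h4 : ∑ i ∈ Tᶜ, ‖x i‖ = 0 :=
    Finset.sum_eq_zero fun i hi => by simp [hx i (Finset.mem_compl.1 hi)]
  have h5 : ∑ i ∈ Tᶜ, ‖x i + h i‖ = ∑ i ∈ Tᶜ, ‖h i‖ :=
    Finset.sum_congr rfl fun i hi => by simp [hx i (Finset.mem_compl.1 hi)]
  have h6 : ∑ i ∈ T, ‖x i‖ ≤ ∑ i ∈ T, ‖x i + h i‖ + ∑ i ∈ T, ‖h i‖ := by
    rw [← Finset.sum_add_distrib]
    exact Finset.sum_le_sum fun i _ => norm_le_add_norm_add _ _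
  linarith

lemma Jp1_eq_sum_norm {p : ℝ} (hp : 1 < p) {K ν : ℕ} (X : Matrix (Fin K) (Fin ν) ℂ) :
    Jp1 p X = ∑ i, ‖WithLp.toLp (ENNReal.ofReal p) (X i)‖ := by
  have hp0 : 0 < p := by linarith
  have hq : (ENNReal.ofReal p).toReal = p := ENNReal.toReal_ofReal hp0.le
  unfold Jp1
  refine Finset.sum_congr rfl fun i _ => ?_
  rw [PiLp.norm_eq_sum (by rw [hq]; exact hp0), hq]

lemma gram_diag_eq_one {n : ℕ} (v : Fin n → ℂ) (hv : l2norm v = 1) :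
    ∑ i, (starRingEnd ℂ) (v i) * v i = 1 := by
  have h : ∑ i, ‖v i‖ ^ 2 = 1 := by
    unfold l2norm at hv
    exact Real.sqrt_eq_one.1 hv
  simp_rw [Complex.conj_mul']
  exact_mod_cast h

/-- For `1 < p < ∞`: if `X₀ ∈ ℂ^{K×ν}` has row-support of size `M`,
`Mε < 1/2`, and `B = G X₀`, then `X₀` is the unique minimizer of `J_{p,1}` subject to
`GX = B`: any other feasible `X ≠ X₀` has strictly larger `J_{p,1}` value. -/
theorem mmv_noiseless_exact_recovery_Jp1
    (N K ν : ℕ) (hN : 0 < N) (hK : 0 < K) (hν : 0 < ν) (ε : ℝ) (hε : 0 < ε)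
    (p : ℝ) (hp : 1 < p)
    (G : Matrix (Fin N) (Fin K) ℂ)
    (hcols : ∀ j : Fin K, l2norm (fun i => G i j) = 1)
    (hcoh : ∀ i j : Fin K, i ≠ j →
      ‖∑ n, (starRingEnd ℂ) (G n i) * G n j‖ < ε)
    (M : ℕ) (X₀ : Matrix (Fin K) (Fin ν) ℂ)
    (hrowsupp : {i | X₀ i ≠ 0}.ncard = M)
    (hMε : (M : ℝ) * ε < 1 / 2)
    (B : Matrix (Fin N) (Fin ν) ℂ) (hB : B = G * X₀) :
    ∀ X : Matrix (Fin K) (Fin ν) ℂ, G * X = B → X ≠ X₀ → Jp1 p X₀ < Jp1 p X := by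
  classical
  intro X hX hne
  subst hB
  have : Fact (1 ≤ ENNReal.ofReal p) := ⟨by simpa using hp.le⟩
  let x : Fin K → PiLp (ENNReal.ofReal p) (fun _ : Fin ν => ℂ) := fun i => WithLp.toLp _ (X₀ i)
  let h : Fin K → PiLp (ENNReal.ofReal p) (fun _ : Fin ν => ℂ) :=
    fun i => WithLp.toLp _ (X i - X₀ i)
  have hGH : ∀ n t, ∑ j, G n j * (X j t - X₀ j t) = 0 := by
    intro n t
    have := congrFun (congrFun hX n) t
    simp only [Matrix.mul_apply] at this
    simp only [mul_sub, Finset.sum_sub_distrib, this, sub_self]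
  have hker : ∀ i, ∑ j, (∑ n, (starRingEnd ℂ) (G n i) * G n j) • h j = 0 := by
    intro i
    ext t
    have : ∑ j, (∑ n, (starRingEnd ℂ) (G n i) * G n j) * (X j t - X₀ j t) = 0 := by
      simp_rw [Finset.sum_mul]
      rw [Finset.sum_comm]
      simp_rw [mul_assoc, ← Finset.mul_sum, hGH, mul_zero, Finset.sum_const_zero]
    simpa [h] using this
  have hrow : ∀ i, ‖h i‖ ≤ ε * ∑ j, ‖h j‖ := fun i =>
    norm_le_of_gram_kernel ε hε.le _ h i (gram_diag_eq_one _ (hcols i))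
      (fun j hij => (hcoh i j hij).le) (hker i)
  have hpos : 0 < ∑ j, ‖h j‖ := by
    obtain ⟨i, hi⟩ := Function.ne_iff.1 hne
    refine Finset.sum_pos' (fun _ _ => norm_nonneg _) ⟨i, Finset.mem_univ i, norm_pos_iff.2 ?_⟩
    intro h0
    exact hi (sub_eq_zero.1 ((WithLp.toLp_eq_zero _).1 h0))
  let T : Finset (Fin K) := Finset.univ.filter fun i => X₀ i ≠ 0
  have hTcard : (T.card : ℝ) = M := by
    rw [← hrowsupp, ← Set.ncard_coe_finset]
    simp [T]
  have hT : 2 * ∑ i ∈ T, ‖h i‖ < ∑ i, ‖h i‖ := by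
    have h1 : ∑ i ∈ T, ‖h i‖ ≤ M * (ε * ∑ j, ‖h j‖) := by
      have := Finset.sum_le_card_nsmul T (fun i => ‖h i‖) _ fun i _ => hrow i
      rwa [nsmul_eq_mul, hTcard] at this
    nlinarith [mul_lt_mul_of_pos_right hMε hpos]
  have key := sum_norm_lt_of_null_space_property T x h (fun i hi => by
    have : X₀ i = 0 := by simpa [T] using hi
    simp [x, this]) hT
  rw [Jp1_eq_sum_norm hp, Jp1_eq_sum_norm hp]
  have hadd : ∀ i, x i + h i = WithLp.toLp (ENNReal.ofReal p) (X i) := fun i => by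
    simp only [x, h, ← WithLp.toLp_add, add_sub_cancel]
  simpa only [hadd] using key
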